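/- Let (V, ‖·‖) be a normed vector space, ε > 0, Θ ⊆ V convex with diam(Θ) ≥ 12ε, and integers k ≥ ℓ ≥ 1 and m ≥ k(N(B(0,1), ‖·‖, 1/4) + 1). Suppose E ⊆ Θ is a finite set of expert locations and f is a deterministic multi-winner voting rule (a function mapping candidate locations and a reported top-k ranking profile to a set of ℓ candidates) such that for every set C of m candidate locations in Θ, every q ∈ ℝ^m, and every top-k ranking profile ≻^k consistent with q, the cumulative regret satisfies max over ℓ-element subsets S' of [m] of Σ_{j∈S'} q_j − Σ_{j∈f(C,E,≻^k)} q_j ≤ ε. Then |E| ≥ M(Θ, ‖·‖, 24ε/ℓ)·(m/(k(N(B(0,1), ‖·‖, 1/4) + 1)) − 1). -/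

import Mathlib

open scoped Classical

section VotingDefs

variable {V : Type*} [NormedAddCommGroup V] [NormedSpace ℝ V]

/-- An expert with top-`k` ranking `pref : Fin k → Fin m` prefers candidate `j` to `j'`:
`j` is ranked at some position `h`, and `j'` is either unranked or ranked strictly later. -/
def Prefers {k m : ℕ} (pref : Fin k → Fin m) (j j' : Fin m) : Prop :=
  ∃ h : Fin k, pref h = j ∧
    ((∀ h' : Fin k, pref h' ≠ j') ∨ ∃ h' : Fin k, pref h' = j' ∧ h < h')

/-- `q` is consistent with the profile `pref` of top-`k` rankings, given candidate
locations `c` and expert locations `e`. -/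
def Consistent {n k m : ℕ} (c : Fin m → V) (e : Fin n → V)
    (pref : Fin n → Fin k → Fin m) (q : Fin m → ℝ) : Prop :=
  ∀ (i : Fin n) (j j' : Fin m), Prefers (pref i) j j' →
    q j' - ‖e i - c j'‖ ≤ q j - ‖e i - c j‖

/-- Edge relation of the graph `G(C, E, ≻^k)`. -/
def HasEdge {n k m : ℕ} (pref : Fin n → Fin k → Fin m) (j j' : Fin m) : Prop :=
  ∃ i : Fin n, Prefers (pref i) j j'

/-- Weight of the edge `j → j'` in `G(C, E, ≻^k)`: the minimum of
`‖e i - c j'‖ - ‖e i - c j‖` over experts `i` preferring `j` to `j'`. -/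
noncomputable def weightG {n k m : ℕ} (c : Fin m → V) (e : Fin n → V)
    (pref : Fin n → Fin k → Fin m) (j j' : Fin m) : ℝ :=
  sInf {x : ℝ | ∃ i : Fin n, Prefers (pref i) j j' ∧ x = ‖e i - c j'‖ - ‖e i - c j‖}

/-- A directed walk along `edge` from `g` to `h`, recorded as its list of vertices. -/
def IsWalk {α : Type*} (edge : α → α → Prop) (l : List α) (g h : α) : Prop :=
  l.Chain' edge ∧ l.head? = some g ∧ l.getLast? = some h

/-- Total weight of a walk (sum of the weights of consecutive pairs). -/
noncomputable def walkWeight {α : Type*} (w : α → α → ℝ) (l : List α) : ℝ :=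
  ((l.zip l.tail).map fun p => w p.1 p.2).sum

/-- Shortest directed path distance; `+∞` if there is no directed path. -/
noncomputable def distG {α : Type*} (edge : α → α → Prop) (w : α → α → ℝ) (g h : α) : EReal :=
  sInf {x : EReal | ∃ l : List α, IsWalk edge l g h ∧ x = ((walkWeight w l : ℝ) : EReal)}

/-- Distance (number of edges) in an unweighted directed graph; `⊤` if unreachable. -/
noncomputable def hopDist {α : Type*} (edge : α → α → Prop) (g h : α) : ℕ∞ :=
  sInf {x : ℕ∞ | ∃ l : List α, IsWalk edge l g h ∧ x = ((l.length - 1 : ℕ) : ℕ∞)}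

/-- `diam(G, S)`: the longest shortest-path length between two vertices of `S`. -/
noncomputable def diamS {α : Type*} (edge : α → α → Prop) (S : Set α) : ℕ∞ :=
  ⨆ (u : α) (_ : u ∈ S) (v : α) (_ : v ∈ S), hopDist edge u v

/-- Edge relation of the unweighted graph `G(C, E, ≻^k)[δ]`. -/
def EdgeDelta {n k m : ℕ} (e : Fin n → V) (pref : Fin n → Fin k → Fin m) (δ : ℝ)
    (j j' : Fin m) : Prop :=
  ∃ i i' : Fin n, Prefers (pref i) j j' ∧ Prefers (pref i') j' j ∧ ‖e i - e i'‖ ≤ δ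

/-- Minimum cardinality of an internal `δ`-cover of `Θ`; `⊤` if no finite cover exists. -/
noncomputable def coverNum (Θ : Set V) (δ : ℝ) : ℕ∞ :=
  sInf {x : ℕ∞ | ∃ X : Finset V, ↑X ⊆ Θ ∧ (∀ θ ∈ Θ, ∃ v ∈ X, ‖θ - v‖ ≤ δ) ∧ x = (X.card : ℕ∞)}

end VotingDefs

/-- Core two-instance argument: a finite set `L` of locations yields two quality vectors with the
same profile and total regret `ℓ * s`. -/
theorem core_bound {V : Type*} [NormedAddCommGroup V] [NormedSpace ℝ V]
    (ε s : ℝ) (Θ : Set V) (hs : 0 < s)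
    (k ℓ nE m : ℕ) (hℓk : ℓ ≤ k)
    (e : Fin nE → V)
    (f : (Fin m → V) → (Fin nE → Fin k → Fin m) → Finset (Fin m))
    (hf : ∀ (c : Fin m → V), (∀ j, c j ∈ Θ) →
      ∀ (q : Fin m → ℝ) (pref : Fin nE → Fin k → Fin m),
        (∀ i, Function.Injective (pref i)) → Consistent c e pref q →
        ∀ S' : Finset (Fin m), S'.card = ℓ →
          (∑ j ∈ S', q j) - (∑ j ∈ f c pref, q j) ≤ ε)
    (L : Finset V) (hLΘ : ∀ l ∈ L, l ∈ Θ) (hcard : L.card * k ≤ m)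
    (x z : V) (hx : x ∈ L) (hz : z ∈ L) (hzx : s ≤ ‖z - x‖)
    (hloc : ∀ i, e i ∈ L ∨ ∃ l ∈ L, ‖e i - l‖ ≤ ‖e i - x‖ - s) :
    (ℓ : ℝ) * s ≤ 2 * ε := by
  -- embedding
  have hφ : Nonempty ((↥L × Fin k) ↪ Fin m) := by
    apply Function.Embedding.nonempty_of_card_le
    simpa using hcard
  obtain ⟨φ⟩ := hφ
  let c : Fin m → V := Function.extend φ (fun p => (p.1 : V)) (fun _ => x)
  have hcφ : ∀ p, c (φ p) = p.1 := fun p => φ.injective.extend_apply _ _ p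
  have hcL : ∀ j, c j ∈ L := by
    intro j
    by_cases h : ∃ p, φ p = j
    · obtain ⟨p, rfl⟩ := h
      rw [hcφ]; exact p.1.2
    · have : c j = x := Function.extend_apply' _ _ _ h
      rw [this]; exact hx
  have hnear : ∀ i, ∃ l : ↥L, ∀ l' ∈ L, ‖e i - l‖ ≤ ‖e i - l'‖ := by
    intro i
    obtain ⟨l, hl, h⟩ := L.exists_min_image (fun l => ‖e i - l‖) ⟨x, hx⟩
    exact ⟨⟨l, hl⟩, h⟩
  choose near hnear using hnear
  let pref : Fin nE → Fin k → Fin m := fun i h => φ (near i, h)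
  have hinj : ∀ i, Function.Injective (pref i) := by
    intro i a b hab
    have := φ.injective hab
    simpa using this
  have hcons : ∀ g : V → ℝ, (∀ i, ∀ l' ∈ L, g l' - ‖e i - l'‖ ≤ g (near i) - ‖e i - near i‖) →
      Consistent c e pref (fun j => g (c j)) := by
    intro g hg i j j' hp
    obtain ⟨h, rfl, -⟩ := hp
    have h1 : c (pref i h) = near i := hcφ _
    simp only [h1]
    exact hg i _ (hcL j')
  have hset : ∀ l ∈ L, ∃ S' : Finset (Fin m), S'.card = ℓ ∧ ∀ j ∈ S', c j = l := by
    intro l hl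
    let ψ : Fin ℓ ↪ Fin m :=
      ((Fin.castLEEmb hℓk).trans ⟨fun h => (((⟨l, hl⟩ : ↥L), h) : ↥L × Fin k), fun a b hab => by
        simpa using hab⟩).trans φ
    refine ⟨Finset.univ.map ψ, by simp, ?_⟩
    intro j hj
    obtain ⟨a, -, rfl⟩ := Finset.mem_map.1 hj
    exact hcφ _
  let g : V → ℝ := fun y => max 0 (s - ‖y - x‖)
  have g0 : ∀ y, 0 ≤ g y := fun y => le_max_left _ _
  have g1 : ∀ y, s - ‖y - x‖ ≤ g y := fun y => le_max_right _ _
  have gx : g x = s := by simp [g, hs.le]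
  have gz : g z = 0 := by simp [g, hzx]
  have gLip : ∀ y y', g y ≤ g y' + ‖y' - y‖ := by
    intro y y'
    apply max_le
    · have := g0 y'; positivity
    · have := norm_sub_le_norm_sub_add_norm_sub y' y x
      have := g1 y'
      linarith
  have hlocal : ∀ i, e i ∈ L → ((near i : V)) = e i := by
    intro i h
    have := hnear i _ h
    rw [sub_self, norm_zero] at this
    exact (sub_eq_zero.1 (norm_le_zero_iff.1 this)).symm
  have hc1 : Consistent c e pref (fun j => g (c j)) := by
    apply hcons
    intro i l' hl'
    rcases hloc i with h | ⟨l, hl, h⟩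
    · rw [hlocal i h]
      have := gLip l' (e i)
      simp only [sub_self, norm_zero]
      linarith
    · have h1 := hnear i l hl
      have h2 := hnear i l' hl'
      have h3 := g0 (near i)
      have h4 := norm_sub_le_norm_sub_add_norm_sub (e i) l' x
      rcases max_cases 0 (s - ‖l' - x‖) with ⟨h5, _⟩ | ⟨h5, _⟩
      · have : g l' = 0 := h5
        linarith
      · have : g l' = s - ‖l' - x‖ := h5
        linarith
  have hc2 : Consistent c e pref (fun j => (fun y => - g y) (c j)) := by
    apply hcons (fun y => - g y)
    intro i l' hl'
    rcases hloc i with h | ⟨l, hl, h⟩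
    · rw [hlocal i h]
      have := gLip (e i) l'
      simp only [sub_self, norm_zero]
      rw [norm_sub_rev] at this
      linarith
    · have h1 := hnear i l hl
      have h2 := hnear i l' hl'
      have h3 := g0 l'
      have h4 := norm_sub_le_norm_sub_add_norm_sub (e i) (near i) x
      have : g (near i) = 0 := max_eq_left (by linarith)
      simp only [this]
      linarith
  obtain ⟨Sx, hSx, hSx'⟩ := hset x hx
  obtain ⟨Sz, hSz, hSz'⟩ := hset z hz
  have r1 := hf c (fun j => hLΘ _ (hcL j)) _ pref hinj hc1 Sx hSx
  have r2 := hf c (fun j => hLΘ _ (hcL j)) _ pref hinj hc2 Sz hSz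
  have s1 : ∑ j ∈ Sx, g (c j) = ℓ * s := by
    rw [Finset.sum_congr rfl (fun j hj => by rw [hSx' j hj, gx])]
    simp [hSx]
  have s2 : ∑ j ∈ Sz, - g (c j) = 0 :=
    Finset.sum_eq_zero (fun j hj => by rw [hSz' j hj, gz, neg_zero])
  simp only [Finset.sum_neg_distrib] at r2 s2
  linarith

/-- For each packing point, the number of experts in its open ball is large. -/
theorem local_bound {V : Type*} [NormedAddCommGroup V] [NormedSpace ℝ V]
    (ε : ℝ) (hε : 0 < ε) (Θ : Set V) (hconv : Convex ℝ Θ)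
    (hdiam : ENNReal.ofReal (12 * ε) ≤ EMetric.diam Θ)
    (k ℓ nE m : ℕ) (hℓ : 1 ≤ ℓ) (hℓk : ℓ ≤ k)
    (e : Fin nE → V) (he : ∀ i, e i ∈ Θ)
    (f : (Fin m → V) → (Fin nE → Fin k → Fin m) → Finset (Fin m))
    (hf : ∀ (c : Fin m → V), (∀ j, c j ∈ Θ) →
      ∀ (q : Fin m → ℝ) (pref : Fin nE → Fin k → Fin m),
        (∀ i, Function.Injective (pref i)) → Consistent c e pref q →
        ∀ S' : Finset (Fin m), S'.card = ℓ →
          (∑ j ∈ S', q j) - (∑ j ∈ f c pref, q j) ≤ ε)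
    (X : Finset V) (hX : ∀ θ ∈ Metric.closedBall (0 : V) 1, ∃ v ∈ X, ‖θ - v‖ ≤ 1 / 4)
    (x : V) (hx : x ∈ Θ) :
    m ≤ k * (X.card + 1) *
      ((Finset.univ.filter (fun i : Fin nE => ‖e i - x‖ < 12 * ε / ℓ)).card + 1) := by
  by_contra! hlt
  set r : ℝ := 12 * ε / ℓ with hr
  set A := Finset.univ.filter (fun i : Fin nE => ‖e i - x‖ < r) with hA
  have hℓ1 : (1 : ℝ) ≤ ℓ := by exact_mod_cast hℓ
  have hr0 : 0 < r := by positivity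
  have hrε : r ≤ 12 * ε := div_le_self (by positivity) hℓ1
  have hproj : ∀ a ∈ Θ, r ≤ ‖a - x‖ → ∃ u ∈ Θ, ‖u - x‖ = r ∧ ‖a - u‖ = ‖a - x‖ - r := by
    intro a ha har
    have h0 : 0 < ‖a - x‖ := by linarith
    have h1 : r / ‖a - x‖ ≤ 1 := (div_le_one h0).2 har
    have h2 : 0 ≤ r / ‖a - x‖ := by positivity
    refine ⟨x + (r / ‖a - x‖) • (a - x), hconv.add_smul_sub_mem hx ha ⟨h2, h1⟩, ?_, ?_⟩
    · rw [add_sub_cancel_left, norm_smul, Real.norm_of_nonneg h2]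
      field_simp
    · have : a - (x + (r / ‖a - x‖) • (a - x)) = (1 - r / ‖a - x‖) • (a - x) := by
        rw [sub_smul, one_smul]; abel
      rw [this, norm_smul, Real.norm_of_nonneg (by linarith)]
      field_simp
  have hz : ∃ z ∈ Θ, ‖z - x‖ ≤ r ∧ r / 4 ≤ ‖z - x‖ := by
    have : ∃ a ∈ Θ, 3 * ε < ‖a - x‖ := by
      by_contra! hcon
      have h1 : EMetric.diam Θ ≤ ENNReal.ofReal (6 * ε) := by
        apply Metric.ediam_le
        intro a ha b hb
        rw [edist_dist]
        apply ENNReal.ofReal_le_ofReal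
        rw [dist_eq_norm]
        have := norm_sub_le_norm_sub_add_norm_sub a x b
        have := hcon a ha
        have := hcon b hb
        rw [norm_sub_rev] at this
        linarith
      have h2 := hdiam.trans h1
      rw [ENNReal.ofReal_le_ofReal_iff (by positivity)] at h2
      linarith
    obtain ⟨a, ha, hax⟩ := this
    by_cases har : r ≤ ‖a - x‖
    · obtain ⟨u, hu, hux, -⟩ := hproj a ha har
      exact ⟨u, hu, hux.le, by linarith⟩
    · exact ⟨a, ha, by linarith, by linarith⟩
  obtain ⟨z, hzΘ, hzr, hzs⟩ := hz
  have hcov : ∀ u, ‖u - x‖ ≤ r → ∃ v ∈ X, ‖u - (x + r • v)‖ ≤ r / 4 := by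
    intro u hu
    obtain ⟨v, hv, h⟩ := hX (r⁻¹ • (u - x)) (by
      rw [mem_closedBall_zero_iff, norm_smul, norm_inv, Real.norm_of_nonneg hr0.le,
        inv_mul_le_iff₀ hr0]
      linarith)
    refine ⟨v, hv, ?_⟩
    have : u - (x + r • v) = r • (r⁻¹ • (u - x) - v) := by
      rw [smul_sub, smul_inv_smul₀ hr0.ne']; abel
    rw [this, norm_smul, Real.norm_of_nonneg hr0.le]
    nlinarith
  obtain ⟨v0, hv0, hzv0⟩ := hcov z hzr
  have hrep : ∀ v, ∃ y ∈ Θ, (v = v0 → y = z) ∧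
      ∀ u ∈ Θ, ‖u - (x + r • v)‖ ≤ r / 4 → ‖u - y‖ ≤ r / 2 := by
    have key : ∀ v y u, ‖y - (x + r • v)‖ ≤ r / 4 → ‖u - (x + r • v)‖ ≤ r / 4 →
        ‖u - y‖ ≤ r / 2 := by
      intro v y u h1 h2
      have := norm_sub_le_norm_sub_add_norm_sub u (x + r • v) y
      rw [norm_sub_rev (x + r • v) y] at this
      linarith
    intro v
    by_cases hv : v = v0
    · subst hv
      exact ⟨z, hzΘ, fun _ => rfl, fun u _ hu => key _ _ _ hzv0 hu⟩
    · by_cases hne : ∃ y ∈ Θ, ‖y - (x + r • v)‖ ≤ r / 4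
      · obtain ⟨y, hy, hyv⟩ := hne
        exact ⟨y, hy, fun h => absurd h hv, fun u _ hu => key _ _ _ hyv hu⟩
      · exact ⟨x, hx, fun h => absurd h hv, fun u hu1 hu => absurd ⟨u, hu1, hu⟩ hne⟩
  choose rep hrepΘ hrepz hrep using hrep
  let L : Finset V := insert x (X.image rep ∪ A.image e)
  have hLcard : L.card ≤ (X.card + A.card) + 1 := by
    have h1 := Finset.card_insert_le x (X.image rep ∪ A.image e)
    have h2 := Finset.card_union_le (X.image rep) (A.image e)
    have h3 : (X.image rep).card ≤ X.card := Finset.card_image_le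
    have h4 : (A.image e).card ≤ A.card := Finset.card_image_le
    simp only [L]
    omega
  have hmain := core_bound ε (r / 4) Θ (by positivity) k ℓ nE m hℓk e f hf L
    (by
      intro l hl
      simp only [L, Finset.mem_insert, Finset.mem_union, Finset.mem_image] at hl
      rcases hl with rfl | ⟨v, _, rfl⟩ | ⟨i, _, rfl⟩
      · exact hx
      · exact hrepΘ v
      · exact he i)
    (by nlinarith [Nat.zero_le (k * (X.card * A.card)), Nat.mul_le_mul_right k hLcard])
    x z (by simp [L])
    (by
      have : z = rep v0 := (hrepz v0 rfl).symm
      rw [this]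
      exact Finset.mem_insert_of_mem (Finset.mem_union_left _ (Finset.mem_image_of_mem _ hv0)))
    hzs
    (by
      intro i
      by_cases hi : ‖e i - x‖ < r
      · left
        refine Finset.mem_insert_of_mem (Finset.mem_union_right _ (Finset.mem_image_of_mem _ ?_))
        simp [hA, hi]
      · right
        obtain ⟨u, hu, hux, hue⟩ := hproj (e i) (he i) (by linarith)
        obtain ⟨v, hv, huv⟩ := hcov u hux.le
        refine ⟨rep v, Finset.mem_insert_of_mem
          (Finset.mem_union_left _ (Finset.mem_image_of_mem _ hv)), ?_⟩
        have h1 := hrep v u hu huv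
        have h2 := norm_sub_le_norm_sub_add_norm_sub (e i) u (rep v)
        linarith)
  have : (ℓ : ℝ) * (r / 4) = 3 * ε := by
    rw [hr]; field_simp; norm_num
  linarith

/-- **multi-winner lower bound.** Let `Θ ⊆ V` be convex with `diam(Θ) ≥ 12ε`,
`k ≥ ℓ ≥ 1`, and `m ≥ k(N(B(0,1), ‖·‖, 1/4) + 1)`. If a committee `e` of `nE` experts in `Θ`
together with a deterministic rule `f` selecting `ℓ` candidates guarantees cumulative regret
at most `ε` for every `m` candidates in `Θ`, every quality vector, and every consistent
top-`k` profile, then `nE ≥ M(Θ, ‖·‖, 24ε/ℓ)·(m/(k(N(B(0,1), ‖·‖, 1/4) + 1)) - 1)`;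
equivalently, the bound holds with `M` replaced by the cardinality of an arbitrary
`24ε/ℓ`-packing of `Θ`. -/
theorem statement16 {V : Type*} [NormedAddCommGroup V] [NormedSpace ℝ V]
    (ε : ℝ) (hε : 0 < ε) (Θ : Set V) (hconv : Convex ℝ Θ)
    (hdiam : ENNReal.ofReal (12 * ε) ≤ EMetric.diam Θ)
    (k ℓ nE m : ℕ) (hℓ : 1 ≤ ℓ) (hℓk : ℓ ≤ k)
    (hm : (k : ℕ∞) * (coverNum (Metric.closedBall (0 : V) 1) (1 / 4) + 1) ≤ (m : ℕ∞))
    (e : Fin nE → V) (he : ∀ i, e i ∈ Θ)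
    (f : (Fin m → V) → (Fin nE → Fin k → Fin m) → Finset (Fin m))
    (hfcard : ∀ c pref, (f c pref).card = ℓ)
    (hf : ∀ (c : Fin m → V), (∀ j, c j ∈ Θ) →
      ∀ (q : Fin m → ℝ) (pref : Fin nE → Fin k → Fin m),
        (∀ i, Function.Injective (pref i)) → Consistent c e pref q →
        ∀ S' : Finset (Fin m), S'.card = ℓ →
          (∑ j ∈ S', q j) - (∑ j ∈ f c pref, q j) ≤ ε) :
    ∀ P : Finset V, ↑P ⊆ Θ →
      (∀ x ∈ P, ∀ y ∈ P, x ≠ y → 24 * ε / ℓ ≤ ‖x - y‖) →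
      (P.card : ℝ) *
          ((m : ℝ) / ((k : ℝ) *
            (((coverNum (Metric.closedBall (0 : V) 1) (1 / 4)).toNat : ℝ) + 1)) - 1)
        ≤ (nE : ℝ) := by
  intro P hP hpack
  have hk : 1 ≤ k := hℓ.trans hℓk
  have hne : {y : ℕ∞ | ∃ X : Finset V, ↑X ⊆ Metric.closedBall (0 : V) 1 ∧
      (∀ θ ∈ Metric.closedBall (0 : V) 1, ∃ v ∈ X, ‖θ - v‖ ≤ 1 / 4) ∧
      y = (X.card : ℕ∞)}.Nonempty := by
    by_contra hcon
    rw [Set.not_nonempty_iff_eq_empty] at hcon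
    have : coverNum (Metric.closedBall (0 : V) 1) (1 / 4) = ⊤ := by
      unfold coverNum
      rw [hcon, sInf_empty]
    rw [this, top_add, ENat.mul_top (by exact_mod_cast (by omega : k ≠ 0))] at hm
    exact absurd hm (by simp)
  obtain ⟨X, -, hX, hXc⟩ := csInf_mem hne
  have hcov : coverNum (Metric.closedBall (0 : V) 1) (1 / 4) = (X.card : ℕ∞) := hXc
  rw [hcov, ENat.toNat_coe]
  have hk' : (0 : ℝ) < k := by exact_mod_cast hk
  have hℓ' : (0 : ℝ) < ℓ := by exact_mod_cast hℓ
  let A : V → Finset (Fin nE) := fun x =>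
    Finset.univ.filter (fun i : Fin nE => ‖e i - x‖ < 12 * ε / ℓ)
  have hA : ∀ x ∈ P, (m : ℝ) / (k * ((X.card : ℝ) + 1)) - 1 ≤ ((A x).card : ℝ) := by
    intro x hx
    have h := local_bound ε hε Θ hconv hdiam k ℓ nE m hℓ hℓk e he f hf X hX x (hP hx)
    have h' : (m : ℝ) ≤ k * ((X.card : ℝ) + 1) * ((A x).card + 1) := by exact_mod_cast h
    rw [sub_le_iff_le_add, div_le_iff₀ (by positivity)]
    linarith
  have hdisj : (P : Set V).PairwiseDisjoint A := by
    intro x hx y hy hxy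
    rw [Function.onFun, Finset.disjoint_left]
    intro i hi hi'
    simp only [A, Finset.mem_filter, Finset.mem_univ, true_and] at hi hi'
    have h1 := hpack x hx y hy hxy
    have h2 := norm_sub_le_norm_sub_add_norm_sub x (e i) y
    rw [norm_sub_rev x (e i)] at h2
    have h3 : 24 * ε / (ℓ : ℝ) = 12 * ε / ℓ + 12 * ε / ℓ := by ring
    linarith
  have hsum : ∑ x ∈ P, (A x).card ≤ nE := by
    rw [← Finset.card_biUnion hdisj]
    simpa using Finset.card_le_univ (P.biUnion A)
  calc _ = ∑ x ∈ P, ((m : ℝ) / (k * ((X.card : ℝ) + 1)) - 1) := by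
        rw [Finset.sum_const, nsmul_eq_mul]
    _ ≤ ∑ x ∈ P, ((A x).card : ℝ) := Finset.sum_le_sum hA
    _ ≤ nE := by exact_mod_cast hsum
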